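/- Let L : (0,∞) → (0,∞) be measurable and slowly varying, and let 0 < D < 1. Then Σ_{i=1}^{n} Σ_{j=1, j≠i}^{n} |i−j|^{−D} L(|i−j|) is asymptotically equivalent to (2/((1−D)(2−D))) · n^{2−D} L(n), i.e. the ratio of the two sides tends to 1 as n → ∞. -/

import Mathlib

open Filter Finset

/-!
For a slowly varying `L` the ratios `L (c * x) / L x` converge to `1` uniformly for `c` in compact
subsets of `(0, ∞)`: the exceptional sets of `v` with `L (exp v * x) / L x` far from `1` have
vanishing measure, so two of their translates cannot cover an interval. Iterating over geometric
scales gives Potter's bound `|L x / L y| ≤ C (y / x) ^ δ`. Therefore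
`n⁻¹ ∑ w (k / n) (k / n) ^ α (L k / L n)`, read as the integral of a step function of `⌈t n⌉`,
converges by dominated convergence to `∫ w t * t ^ α` over `[0, 1]` whenever `α > -1`.
Grouping the double sum by `k = |i - j|` gives `2 n ∑ (1 - k / n) k ^ (-D) L k`, which is the case
`w t = 1 - t`, `α = -D`.
-/

section StepFunction

open MeasureTheory Topology

variable {E : Type*} [NormedAddCommGroup E] [NormedSpace ℝ E] [CompleteSpace E]

lemma integral_comp_nat_ceil (g : ℕ → E) (n : ℕ) :
    ∫ x in (0 : ℝ)..n, g ⌈x⌉₊ = ∑ k ∈ Icc 1 n, g k := by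
  have hceil : ∀ k : ℕ, ∀ x ∈ Set.uIoc (k : ℝ) (k + 1 : ℕ), g (k + 1) = g ⌈x⌉₊ := by
    intro k x hx
    rw [Set.uIoc_of_le (by simp), Set.mem_Ioc] at hx
    rw [(Nat.ceil_eq_iff k.succ_ne_zero).2 ⟨by simpa using hx.1, hx.2⟩]
  have hint : ∀ k < n, IntervalIntegrable (fun x : ℝ => g ⌈x⌉₊) volume k (k + 1 : ℕ) :=
    fun k _ => intervalIntegrable_const.congr (hceil k)
  have hpiece : ∀ k : ℕ, ∫ x in (k : ℝ)..(k + 1 : ℕ), g ⌈x⌉₊ = g (k + 1) := by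
    intro k
    rw [← intervalIntegral.integral_congr_ae (Eventually.of_forall (hceil k)),
      intervalIntegral.integral_const, Nat.cast_succ, add_sub_cancel_left, one_smul]
  rw [← Nat.cast_zero, ← intervalIntegral.sum_integral_adjacent_intervals hint,
    sum_congr rfl fun k _ => hpiece k, range_eq_Ico, sum_Ico_add', Ico_add_one_right_eq_Icc]

lemma integral_comp_nat_ceil_mul (g : ℕ → E) {n : ℕ} (hn : n ≠ 0) :
    ∫ t in (0 : ℝ)..1, g ⌈t * n⌉₊ = (n : ℝ)⁻¹ • ∑ k ∈ Icc 1 n, g k := by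
  rw [intervalIntegral.integral_comp_mul_right (fun x => g ⌈x⌉₊) (Nat.cast_ne_zero.2 hn), zero_mul,
    one_mul, integral_comp_nat_ceil]

lemma nat_ceil_mul_mem_Icc {t : ℝ} (ht : t ∈ Set.Ioc 0 1) {n : ℕ} (hn : n ≠ 0) :
    ⌈t * n⌉₊ ∈ Icc 1 n :=
  mem_Icc.2 ⟨Nat.ceil_pos.2 (mul_pos ht.1 (Nat.cast_pos.2 hn.pos)),
    Nat.ceil_le.2 (mul_le_of_le_one_left n.cast_nonneg ht.2)⟩

lemma natCast_div_mem_Icc {k n : ℕ} (hkn : k ≤ n) : (k : ℝ) / n ∈ Set.Icc 0 1 :=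
  ⟨by positivity, div_le_one_of_le₀ (Nat.cast_le.2 hkn) n.cast_nonneg⟩

lemma tendsto_nat_ceil_mul_natCast_div {t : ℝ} (ht : 0 ≤ t) :
    Tendsto (fun n : ℕ => (⌈t * n⌉₊ : ℝ) / n) atTop (𝓝 t) :=
  (tendsto_nat_ceil_mul_div_atTop ht).comp tendsto_natCast_atTop_atTop

end StepFunction

section SlowVariation

open MeasureTheory Topology

/-- Slow variation at infinity in the sense of Karamata. Neither measurability nor positivity is
built in; the ratio at `a = 1` forces `L` to be eventually nonzero because `0 / 0 = 0`. -/
def IsSlowlyVarying (L : ℝ → ℝ) : Prop :=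
  ∀ a > (0 : ℝ), Tendsto (fun x => L (a * x) / L x) atTop (𝓝 1)

lemma exists_measurableSet_mem_nhds_one_div_mem {U : Set ℝ} (hU : U ∈ 𝓝 1) :
    ∃ V ∈ 𝓝 (1 : ℝ), MeasurableSet V ∧ ∀ p ∈ V, ∀ q ∈ V, p ≠ 0 ∧ p / q ∈ U := by
  have hdiv : Tendsto (fun z : ℝ × ℝ => z.1 / z.2) (𝓝 1 ×ˢ 𝓝 1) (𝓝 1) := by
    have hcont : ContinuousAt (fun z : ℝ × ℝ => z.1 / z.2) (1, 1) :=
      continuousAt_fst.div continuousAt_snd one_ne_zero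
    simpa only [ContinuousAt, nhds_prod_eq, div_one] using hcont
  obtain ⟨W, hW, hWU⟩ := mem_prod_same_iff.1 (hdiv hU)
  obtain ⟨V, hVW, hVo, hV1⟩ := mem_nhds_iff.1 (inter_mem hW (isOpen_ne.mem_nhds one_ne_zero))
  exact ⟨V, hVo.mem_nhds hV1, hVo.measurableSet,
    fun p hp q hq => ⟨(hVW hp).2, hWU (Set.mk_mem_prod (hVW hp).1 (hVW hq).1)⟩⟩

lemma exists_mem_Icc_add_notMem {A B : Set ℝ} (hA : volume A < 1 / 2) (hB : volume B < 1 / 2)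
    (u : ℝ) : ∃ v ∈ Set.Icc (0 : ℝ) 1, u + v ∉ A ∧ v ∉ B := by
  have hcover : volume ((u + ·) ⁻¹' A ∪ B) < volume (Set.Icc (0 : ℝ) 1) := calc
    volume ((u + ·) ⁻¹' A ∪ B) ≤ volume A + volume B := by
      simpa only [measure_preimage_add] using measure_union_le (μ := volume) ((u + ·) ⁻¹' A) B
    _ < 1 / 2 + 1 / 2 := ENNReal.add_lt_add hA hB
    _ = volume (Set.Icc (0 : ℝ) 1) := by simp [ENNReal.inv_two_add_inv_two]
  obtain ⟨v, hv, hvn⟩ := Set.not_subset.1 fun h => (measure_mono h).not_gt hcover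
  exact ⟨v, hv, fun h => hvn (Or.inl h), fun h => hvn (Or.inr h)⟩

lemma abs_le_pow_mul_abs_pow_mul {f : ℝ → ℝ} {C b x : ℝ} (hC : 0 ≤ C) (hb : 1 ≤ b) (hx : 0 ≤ x)
    (h : ∀ y ≥ x, |f y| ≤ C * |f (b * y)|) (n : ℕ) : |f x| ≤ C ^ n * |f (b ^ n * x)| := by
  induction n with
  | zero => simp
  | succ n ih =>
    calc |f x| ≤ C ^ n * |f (b ^ n * x)| := ih
      _ ≤ C ^ n * (C * |f (b * (b ^ n * x))|) := by
        gcongr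
        exact h _ (le_mul_of_one_le_left hx (one_le_pow₀ hb))
      _ = C ^ (n + 1) * |f (b ^ (n + 1) * x)| := by
        rw [← mul_assoc b, ← pow_succ', pow_succ C, mul_assoc]

namespace IsSlowlyVarying

variable {L : ℝ → ℝ}

lemma eventually_ne_zero (hL : IsSlowlyVarying L) : ∀ᶠ x in atTop, L x ≠ 0 :=
  ((hL 1 one_pos).eventually_ne one_ne_zero).mono fun _ hx => (div_ne_zero_iff.1 hx).2

lemma tendsto_volume_exp_ratio_notMem (hL : IsSlowlyVarying L) (hm : Measurable L)
    {s V : Set ℝ} (hs : MeasurableSet s) (hs_fin : volume s ≠ ⊤) (hV : MeasurableSet V)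
    (hV1 : V ∈ 𝓝 1) :
    Tendsto (fun x => volume (s ∩ {v | L (Real.exp v * x) / L x ∉ V})) atTop (𝓝 0) := by
  rw [← measure_empty (μ := (volume : Measure ℝ))]
  refine tendsto_measure_of_tendsto_indicator atTop (fun x => hs.inter ?_) hs hs_fin
    (Eventually.of_forall fun _ => Set.inter_subset_left) fun v => ?_
  · exact (hV.preimage (by fun_prop : Measurable fun v => L (Real.exp v * x) / L x)).compl
  · filter_upwards [hL _ (Real.exp_pos v) hV1] with x hx
    simpa using fun _ => hx

theorem tendstoUniformlyOn_ratio (hL : IsSlowlyVarying L) (hm : Measurable L) {a b : ℝ}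
    (ha : 0 < a) :
    TendstoUniformlyOn (fun x c => L (c * x) / L x) 1 atTop (Set.Icc a b) := by
  suffices h : ∀ U ∈ 𝓝 (1 : ℝ), ∀ᶠ x in atTop, ∀ c ∈ Set.Icc a b, L (c * x) / L x ∈ U from
    fun _ hu => h _ (UniformSpace.ball_mem_nhds _ hu)
  intro U hU
  obtain ⟨V, hV1, hV, hVU⟩ := exists_measurableSet_mem_nhds_one_div_mem hU
  have hsmall : ∀ p q : ℝ, ∀ᶠ x in atTop,
      volume (Set.Icc p q ∩ {v | L (Real.exp v * x) / L x ∉ V}) < 1 / 2 := fun p q =>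
    (hL.tendsto_volume_exp_ratio_notMem hm measurableSet_Icc measure_Icc_lt_top.ne hV
      hV1).eventually_lt_const (by simp)
  filter_upwards [eventually_ge_atTop 0, hsmall (Real.log a) (Real.log b + 1),
    (tendsto_id.const_mul_atTop ha).eventually (eventually_forall_ge_atTop.2 (hsmall 0 1))]
    with x hx0 hx hax c hc
  have hc0 : 0 < c := ha.trans_le hc.1
  obtain ⟨v, hv, hxv, hcv⟩ := exists_mem_Icc_add_notMem hx
    (hax (c * x) (mul_le_mul_of_nonneg_right hc.1 hx0)) (Real.log c)
  -- The ratios in `hp` and `hq` share their numerator, so their quotient is `L (c * x) / L x`.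
  have hlog_mem : Real.log c + v ∈ Set.Icc (Real.log a) (Real.log b + 1) :=
    ⟨by linarith [Real.log_le_log ha hc.1, hv.1], by linarith [Real.log_le_log hc0 hc.2, hv.2]⟩
  have hexp : Real.exp (Real.log c + v) * x = Real.exp v * (c * x) := by
    rw [Real.exp_add, Real.exp_log hc0]; ring
  have hp : L (Real.exp v * (c * x)) / L x ∈ V := by
    by_contra h
    exact hxv ⟨hlog_mem, by rwa [← hexp] at h⟩
  have hq : L (Real.exp v * (c * x)) / L (c * x) ∈ V := by
    by_contra h
    exact hcv ⟨hv, h⟩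
  obtain ⟨hne, hmem⟩ := hVU _ hp _ hq
  rwa [div_div_div_cancel_left' _ _ (div_ne_zero_iff.1 hne).1] at hmem

lemma tendsto_ratio_of_tendsto {ι : Type*} {l : Filter ι} {c f : ι → ℝ} {t : ℝ}
    (hL : IsSlowlyVarying L) (hm : Measurable L) (ht : 0 < t) (hc : Tendsto c l (𝓝 t))
    (hf : Tendsto f l atTop) :
    Tendsto (fun i => L (c i * f i) / L (f i)) l (𝓝 1) := by
  have hunif : TendstoUniformlyOn (fun i c => L (c * f i) / L (f i)) 1 l
      (Set.Icc (t / 2) (2 * t)) :=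
    fun u hu => hf.eventually (hL.tendstoUniformlyOn_ratio hm (half_pos ht) u hu)
  exact hunif.tendsto_comp continuousWithinAt_const <| tendsto_nhdsWithin_iff.2
    ⟨hc, hc.eventually_mem (Icc_mem_nhds (half_lt_self ht) (by linarith))⟩

lemma eventually_forall_abs_le_mul (hL : IsSlowlyVarying L) (hm : Measurable L) {C : ℝ}
    (hC : 1 < C) (b : ℝ) :
    ∀ᶠ x in atTop, ∀ c ∈ Set.Icc 1 b, |L x| ≤ C * |L (c * x)| := by
  have hinv : 0 < 1 - C⁻¹ := sub_pos.2 (inv_lt_one_of_one_lt₀ hC)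
  filter_upwards [Metric.tendstoUniformlyOn_iff.1 (hL.tendstoUniformlyOn_ratio hm one_pos) _ hinv,
    hL.eventually_ne_zero] with x hx hx0 c hc
  have hratio : C⁻¹ ≤ |L (c * x)| / |L x| := by
    rw [← abs_div]
    have hdist := (abs_lt.1 (hx c hc)).2
    rw [Pi.one_apply] at hdist
    linarith [le_abs_self (L (c * x) / L x)]
  rwa [le_div_iff₀ (abs_pos.2 hx0), inv_mul_le_iff₀ (by linarith)] at hratio

theorem eventually_forall_abs_le_mul_rpow (hL : IsSlowlyVarying L) (hm : Measurable L) {C δ : ℝ}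
    (hC : 1 < C) (hδ : 0 < δ) :
    ∀ᶠ x in atTop, ∀ y ≥ x, |L x| ≤ C * (y / x) ^ δ * |L y| := by
  have hC0 : 0 < C := one_pos.trans hC
  set b : ℝ := C ^ δ⁻¹ with hb
  have hb1 : 1 < b := Real.one_lt_rpow hC (inv_pos.2 hδ)
  filter_upwards [eventually_gt_atTop 0,
    eventually_forall_ge_atTop.2 (hL.eventually_forall_abs_le_mul hm hC b)] with x hx0 hstep y hxy
  obtain ⟨n, hn, hn'⟩ := exists_nat_pow_near ((one_le_div hx0).2 hxy) hb1
  have hbn : 0 < b ^ n := pow_pos (one_pos.trans hb1) n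
  have hbn1 : x ≤ b ^ n * x := le_mul_of_one_le_left hx0.le (one_le_pow₀ hb1.le)
  have hlast : |L (b ^ n * x)| ≤ C * |L y| := by
    have hc : y / x / b ^ n ∈ Set.Icc 1 b :=
      ⟨(one_le_div hbn).2 hn, (div_le_iff₀ hbn).2 (by rw [← pow_succ']; exact hn'.le)⟩
    have hy : y / x / b ^ n * (b ^ n * x) = y := by field_simp
    simpa only [hy] using hstep _ hbn1 _ hc
  have hpow : C ^ n ≤ (y / x) ^ δ := calc
    C ^ n = (b ^ n) ^ δ := by
      rw [← Real.rpow_natCast_mul (by positivity), mul_comm, Real.rpow_mul_natCast (by positivity),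
        hb, Real.rpow_inv_rpow hC0.le hδ.ne']
    _ ≤ (y / x) ^ δ := Real.rpow_le_rpow hbn.le hn hδ.le
  have hrpow0 : 0 ≤ (y / x) ^ δ := (pow_pos hC0 n).le.trans hpow
  calc |L x| ≤ C ^ n * |L (b ^ n * x)| :=
        abs_le_pow_mul_abs_pow_mul hC0.le hb1.le hx0.le
          (fun z hz => hstep z hz b ⟨hb1.le, le_rfl⟩) n
    _ ≤ (y / x) ^ δ * (C * |L y|) := by gcongr
    _ = C * (y / x) ^ δ * |L y| := by ring

lemma exists_eventually_forall_abs_ratio_le_rpow (hL : IsSlowlyVarying L) (hm : Measurable L)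
    {δ : ℝ} (hδ : 0 < δ) :
    ∃ C, ∀ᶠ n : ℕ in atTop, ∀ k ∈ Icc 1 n, |L k / L n| ≤ C * ((k : ℝ) / n) ^ (-δ) := by
  have hpotter := tendsto_natCast_atTop_atTop.eventually
    ((hL.eventually_forall_abs_le_mul_rpow hm one_lt_two hδ).and hL.eventually_ne_zero)
  obtain ⟨N, hN⟩ := eventually_atTop.1 hpotter
  -- `M` absorbs the finitely many indices `k < N` that Potter's bound does not reach.
  set M : ℝ := 1 + ∑ k ∈ Icc 1 N, |L k / L N|
  have hM1 : 1 ≤ M := le_add_of_nonneg_right (sum_nonneg fun _ _ => abs_nonneg _)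
  have hmax : ∀ k : ℕ, 1 ≤ k → |L k| ≤ M * |L (max k N : ℕ)| := by
    intro k hk
    rcases le_total N k with h | h
    · rw [max_eq_left h]
      exact le_mul_of_one_le_left (abs_nonneg _) hM1
    · rw [max_eq_right h, ← div_le_iff₀ (abs_pos.2 (hN N le_rfl).2), ← abs_div]
      have := single_le_sum (f := fun k : ℕ => |L k / L N|) (fun _ _ => abs_nonneg _)
        (mem_Icc.2 ⟨hk, h⟩)
      linarith
  refine ⟨M * 2, (eventually_ge_atTop N).mono fun n hn k hk => ?_⟩
  obtain ⟨hk1, hkn⟩ := mem_Icc.1 hk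
  have : (0 : ℝ) < k := by exact_mod_cast hk1
  rw [abs_div, div_le_iff₀ (abs_pos.2 (hN n hn).2), Real.rpow_neg (by positivity),
    ← Real.inv_rpow (by positivity), inv_div]
  calc |L k| ≤ M * |L (max k N : ℕ)| := hmax k hk1
    _ ≤ M * (2 * ((n : ℝ) / (max k N : ℕ)) ^ δ * |L n|) := by
      gcongr
      exact (hN _ (le_max_right k N)).1 n (Nat.cast_le.2 (max_le hkn hn))
    _ ≤ M * (2 * ((n : ℝ) / k) ^ δ * |L n|) := by
      gcongr
      exact le_max_left k N
    _ = M * 2 * ((n : ℝ) / k) ^ δ * |L n| := by ring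

lemma tendsto_ceil_mul_ratio (hL : IsSlowlyVarying L) (hm : Measurable L) {t : ℝ} (ht : 0 < t) :
    Tendsto (fun n : ℕ => L ⌈t * n⌉₊ / L n) atTop (𝓝 1) := by
  refine (hL.tendsto_ratio_of_tendsto hm ht (tendsto_nat_ceil_mul_natCast_div ht.le)
    tendsto_natCast_atTop_atTop).congr' ?_
  filter_upwards [eventually_ne_atTop 0] with n hn
  rw [div_mul_cancel₀ _ (Nat.cast_ne_zero.2 hn)]

variable {w : ℝ → ℝ} {α : ℝ}

lemma exists_eventually_norm_le_mul_rpow (hL : IsSlowlyVarying L) (hm : Measurable L)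
    (hw : ContinuousOn w (Set.Icc 0 1)) {β : ℝ} (hβ : β < α) (hβ0 : β ≤ 0) :
    ∃ C, ∀ᶠ n : ℕ in atTop, ∀ t ∈ Set.Ioc (0 : ℝ) 1,
      ‖w (⌈t * n⌉₊ / n) * (⌈t * n⌉₊ / n : ℝ) ^ α * (L ⌈t * n⌉₊ / L n)‖ ≤ C * t ^ β := by
  obtain ⟨B, hB⟩ := isCompact_Icc.exists_bound_of_continuousOn hw
  obtain ⟨C, hC⟩ := hL.exists_eventually_forall_abs_ratio_le_rpow hm (sub_pos.2 hβ)
  have hB0 : 0 ≤ B := (norm_nonneg _).trans (hB 0 (by simp))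
  refine ⟨B * |C|, ?_⟩
  filter_upwards [hC, eventually_ne_atTop 0] with n hCn hn t ht
  have hk := nat_ceil_mul_mem_Icc ht hn
  have htk : t ≤ (⌈t * n⌉₊ : ℝ) / n :=
    (le_div_iff₀ (Nat.cast_pos.2 hn.pos)).2 (Nat.le_ceil (t * n))
  have hLk := hCn _ hk
  set s : ℝ := (⌈t * n⌉₊ : ℝ) / n
  have hs0 : 0 < s := ht.1.trans_le htk
  rw [norm_mul, norm_mul, Real.norm_of_nonneg (Real.rpow_nonneg hs0.le α), Real.norm_eq_abs (_ / _)]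
  calc ‖w s‖ * s ^ α * |L ⌈t * n⌉₊ / L n|
      ≤ B * s ^ α * (|C| * s ^ (-(α - β))) := by
        gcongr
        · exact hB s (natCast_div_mem_Icc (mem_Icc.1 hk).2)
        · exact hLk.trans (by gcongr; exact le_abs_self C)
    _ = B * |C| * (s ^ α * s ^ (-(α - β))) := by ring
    _ = B * |C| * s ^ β := by rw [← Real.rpow_add hs0, neg_sub, add_sub_cancel]
    _ ≤ B * |C| * t ^ β := by
        gcongr ?_ * ?_
        exact Real.rpow_le_rpow_of_nonpos ht.1 htk hβ0

lemma tendsto_weight_ceil_mul (hL : IsSlowlyVarying L) (hm : Measurable L)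
    (hw : ContinuousOn w (Set.Icc 0 1)) {t : ℝ} (ht : t ∈ Set.Ioc (0 : ℝ) 1) :
    Tendsto (fun n : ℕ => w (⌈t * n⌉₊ / n) * (⌈t * n⌉₊ / n : ℝ) ^ α * (L ⌈t * n⌉₊ / L n)) atTop
      (𝓝 (w t * t ^ α)) := by
  have hceil := tendsto_nat_ceil_mul_natCast_div ht.1.le
  have hmem : ∀ᶠ n : ℕ in atTop, (⌈t * n⌉₊ : ℝ) / n ∈ Set.Icc 0 1 :=
    (eventually_ne_atTop 0).mono fun n hn =>
      natCast_div_mem_Icc (mem_Icc.1 (nat_ceil_mul_mem_Icc ht hn)).2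
  have hwt := (hw t (Set.Ioc_subset_Icc_self ht)).tendsto.comp
    (tendsto_nhdsWithin_iff.2 ⟨hceil, hmem⟩)
  simpa only [mul_one, Function.comp_def] using
    (hwt.mul (hceil.rpow_const (Or.inl ht.1.ne'))).mul (hL.tendsto_ceil_mul_ratio hm ht.1)

theorem tendsto_sum_weight_mul_rpow_div (hL : IsSlowlyVarying L) (hm : Measurable L)
    (hw : ContinuousOn w (Set.Icc 0 1)) (hα : -1 < α) :
    Tendsto
      (fun n : ℕ => (∑ k ∈ Icc 1 n, w (k / n) * ((k : ℝ) ^ α * L k)) / ((n : ℝ) ^ (α + 1) * L n))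
      atTop (𝓝 (∫ t in (0 : ℝ)..1, w t * t ^ α)) := by
  obtain ⟨β, hβ1, hβ⟩ := exists_between (lt_min hα neg_one_lt_zero)
  obtain ⟨C, hC⟩ := hL.exists_eventually_norm_le_mul_rpow hm hw (hβ.trans_le (min_le_left _ _))
    (hβ.le.trans (min_le_right _ _))
  have hlim : Tendsto (fun n : ℕ => ∫ t in (0 : ℝ)..1,
      w (⌈t * n⌉₊ / n) * (⌈t * n⌉₊ / n : ℝ) ^ α * (L ⌈t * n⌉₊ / L n)) atTop
      (𝓝 (∫ t in (0 : ℝ)..1, w t * t ^ α)) := by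
    refine intervalIntegral.tendsto_integral_filter_of_dominated_convergence
      (fun t => C * t ^ β) (Eventually.of_forall fun n => ?_) ?_
      ((intervalIntegral.intervalIntegrable_rpow' hβ1).const_mul C) ?_
    · have hstep : Measurable fun k : ℕ => w (k / n) * (k / n : ℝ) ^ α * (L k / L n) :=
        measurable_from_nat
      exact (hstep.comp (Nat.measurable_ceil.comp (measurable_id.mul_const _))).aestronglyMeasurable
    · filter_upwards [hC] with n hn
      exact Eventually.of_forall fun t ht => hn t (by rwa [Set.uIoc_of_le zero_le_one] at ht)
    · exact Eventually.of_forall fun t ht =>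
        hL.tendsto_weight_ceil_mul hm hw (by rwa [Set.uIoc_of_le zero_le_one] at ht)
  refine hlim.congr' ?_
  filter_upwards [eventually_ne_atTop 0] with n hn
  have hn0 : (0 : ℝ) < n := Nat.cast_pos.2 hn.pos
  rw [integral_comp_nat_ceil_mul
    (fun k => w (k / n) * (k / n : ℝ) ^ α * (L k / L n)) hn, smul_eq_mul, mul_sum, sum_div]
  refine sum_congr rfl fun k _ => ?_
  rw [Real.div_rpow k.cast_nonneg hn0.le, Real.rpow_add_one hn0.ne']
  field_simp

end IsSlowlyVarying

end SlowVariation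

lemma integral_one_sub_mul_rpow {α : ℝ} (hα : -1 < α) :
    ∫ t in (0 : ℝ)..1, (1 - t) * t ^ α = 1 / ((α + 1) * (α + 2)) := by
  have hsplit : Set.EqOn (fun t : ℝ => (1 - t) * t ^ α) (fun t => t ^ α - t ^ (α + 1))
      (Set.uIoc 0 1) := by
    intro t ht
    rw [Set.uIoc_of_le zero_le_one] at ht
    simp only [Real.rpow_add_one ht.1.ne']
    ring
  rw [intervalIntegral.integral_congr_ae (Eventually.of_forall hsplit),
    intervalIntegral.integral_sub (intervalIntegral.intervalIntegrable_rpow' hα)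
      (intervalIntegral.intervalIntegrable_rpow' (by linarith)),
    integral_rpow (Or.inl hα), integral_rpow (Or.inl (by linarith)), Real.one_rpow, Real.one_rpow,
    Real.zero_rpow (by linarith), Real.zero_rpow (by linarith)]
  have h1 : α + 1 ≠ 0 := by linarith
  have h2 : α + 2 ≠ 0 := by linarith
  rw [add_assoc α 1 1, one_add_one_eq_two]
  field_simp
  ring

section ToeplitzSum

lemma sum_Icc_abs_sub_succ {M : Type*} [AddCommMonoid M] (g : ℝ → M) (n : ℕ) :
    ∑ i ∈ Icc 1 n, g |(i : ℝ) - (n + 1 : ℕ)| = ∑ k ∈ Icc 1 n, g k := by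
  refine sum_nbij' (n + 1 - ·) (n + 1 - ·) ?_ ?_ ?_ ?_ ?_ <;> intro i hi <;> rw [mem_Icc] at hi
  iterate 2 exact mem_Icc.2 (by omega)
  iterate 2 exact Nat.sub_sub_self (by omega)
  rw [Nat.cast_sub (by omega), abs_sub_comm,
    abs_of_nonneg (sub_nonneg.2 (Nat.cast_le.2 (by omega)))]

variable {R : Type*} [Ring R] (g : ℝ → R)

lemma sum_sum_abs_sub (n : ℕ) :
    ∑ i ∈ Icc 1 n, ∑ j ∈ Icc 1 n, g |(i : ℝ) - j| =
      n * g 0 + 2 * ∑ k ∈ Icc 1 n, ((n : R) - k) * g k := by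
  induction n with
  | zero => simp
  | succ n ih =>
    have hrow : ∑ j ∈ Icc 1 n, g |((n + 1 : ℕ) : ℝ) - j| = ∑ k ∈ Icc 1 n, g k := by
      simp only [abs_sub_comm ((n + 1 : ℕ) : ℝ), sum_Icc_abs_sub_succ]
    have hweight : ∑ k ∈ Icc 1 n, (((n + 1 : ℕ) : R) - k) * g k =
        ∑ k ∈ Icc 1 n, ((n : R) - k) * g k + ∑ k ∈ Icc 1 n, g k := by
      rw [← sum_add_distrib]
      refine sum_congr rfl fun k _ => ?_
      push_cast
      noncomm_ring
    simp only [sum_Icc_succ_top (Nat.le_add_left 1 n), sum_add_distrib]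
    rw [ih, sum_Icc_abs_sub_succ, hrow, hweight, sub_self, abs_zero, sub_self, zero_mul, add_zero]
    push_cast
    noncomm_ring

lemma sum_sum_erase_abs_sub (n : ℕ) :
    ∑ i ∈ Icc 1 n, ∑ j ∈ (Icc 1 n).erase i, g |(i : ℝ) - j| =
      2 * ∑ k ∈ Icc 1 n, ((n : R) - k) * g k := by
  have hdiag : ∀ i ∈ Icc 1 n, ∑ j ∈ (Icc 1 n).erase i, g |(i : ℝ) - j| =
      ∑ j ∈ Icc 1 n, g |(i : ℝ) - j| - g 0 := by
    intro i hi
    rw [sum_erase_eq_sub hi, sub_self, abs_zero]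
  rw [sum_congr rfl hdiag, sum_sub_distrib, sum_sum_abs_sub, sum_const, Nat.card_Icc,
    add_tsub_cancel_right, nsmul_eq_mul, add_sub_cancel_left]

end ToeplitzSum

theorem stmt4_general (L : ℝ → ℝ) (hLmeas : Measurable L)
    (hLsv : ∀ a > (0 : ℝ), Tendsto (fun x => L (a * x) / L x) atTop (nhds 1))
    (D : ℝ) (hD1 : D < 1) :
    Tendsto
      (fun n : ℕ =>
        (∑ i ∈ Finset.Icc 1 n, ∑ j ∈ (Finset.Icc 1 n).erase i,
            |(i : ℝ) - (j : ℝ)| ^ (-D) * L |(i : ℝ) - (j : ℝ)|) /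
          ((2 / ((1 - D) * (2 - D))) * (n : ℝ) ^ (2 - D) * L n))
      atTop (nhds 1) := by
  have hα : -1 < -D := neg_lt_neg hD1
  have hconst : (1 - D) * (2 - D) ≠ 0 := (mul_pos (by linarith) (by linarith)).ne'
  have hlim := (IsSlowlyVarying.tendsto_sum_weight_mul_rpow_div hLsv hLmeas
    (w := fun t => 1 - t) (by fun_prop) hα).const_mul ((1 - D) * (2 - D))
  rw [integral_one_sub_mul_rpow hα, neg_add_eq_sub, neg_add_eq_sub, mul_one_div_cancel hconst]
    at hlim
  refine hlim.congr' ?_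
  filter_upwards [eventually_ne_atTop 0] with n hn
  have hn0 : (n : ℝ) ≠ 0 := Nat.cast_ne_zero.2 hn
  have hsum : ∑ k ∈ Icc 1 n, ((n : ℝ) - k) * ((k : ℝ) ^ (-D) * L k) =
      n * ∑ k ∈ Icc 1 n, (1 - (k : ℝ) / n) * ((k : ℝ) ^ (-D) * L k) := by
    rw [mul_sum]
    refine sum_congr rfl fun k _ => ?_
    field_simp
  have hpow : (n : ℝ) ^ (2 - D) = (n : ℝ) ^ (1 - D) * n := by
    rw [← Real.rpow_add_one hn0]
    ring_nf
  rw [sum_sum_erase_abs_sub fun x => x ^ (-D) * L x, hsum, hpow]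
  field_simp

/-- For a slowly varying `L` and `0 < D < 1`,
`Σ_{i=1}^n Σ_{j≠i} |i−j|^{−D} L(|i−j|) ∼ (2/((1−D)(2−D))) n^{2−D} L(n)`. -/
theorem stmt4 (L : ℝ → ℝ) (hLpos : ∀ x > (0:ℝ), 0 < L x)
    (hLmeas : Measurable L)
    (hLsv : ∀ a > (0:ℝ), Tendsto (fun x => L (a * x) / L x) atTop (nhds 1))
    (D : ℝ) (hD0 : 0 < D) (hD1 : D < 1) :
    Tendsto
      (fun n : ℕ =>
        (∑ i ∈ Finset.Icc 1 n, ∑ j ∈ (Finset.Icc 1 n).erase i,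
            |(i : ℝ) - (j : ℝ)| ^ (-D) * L |(i : ℝ) - (j : ℝ)|) /
          ((2 / ((1 - D) * (2 - D))) * (n : ℝ) ^ (2 - D) * L n))
      atTop (nhds 1) :=
  stmt4_general L hLmeas hLsv D hD1
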